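/- If a point (x,Λ) ∈ R^n × S^d satisfies the second-order necessary conditions (2NC) for problem (NSDP), then any triple (x,F,Λ) with F ∈ R^{d×d} and C(x) = FF^T satisfies the second-order necessary conditions (2NC) for problem (SSV). -/

import Mathlib

open Matrix

/-- `P` is the Moore–Penrose pseudoinverse of `X`. -/
def IsMoorePenrose {d : ℕ} (X P : Matrix (Fin d) (Fin d) ℝ) : Prop :=
  X * P * X = X ∧ P * X * P = P ∧ (X * P)ᵀ = X * P ∧ (P * X)ᵀ = P * X

/-- The directional derivative `DC_x[z]` of the matrix-valued map `C` at `x` along `z`. -/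
noncomputable def DC {n d : ℕ} (C : (Fin n → ℝ) → Matrix (Fin d) (Fin d) ℝ)
    (x z : Fin n → ℝ) : Matrix (Fin d) (Fin d) ℝ :=
  Matrix.of fun i j => deriv (fun t : ℝ => C (x + t • z) i j) 0

/-- The second directional derivative `D²C_x[z,z]`. -/
noncomputable def D2C {n d : ℕ} (C : (Fin n → ℝ) → Matrix (Fin d) (Fin d) ℝ)
    (x z : Fin n → ℝ) : Matrix (Fin d) (Fin d) ℝ :=
  Matrix.of fun i j => iteratedDeriv 2 (fun t : ℝ => C (x + t • z) i j) 0

/-- The second directional derivative `D²f_x[z,z]`. -/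
noncomputable def D2f {n : ℕ} (f : (Fin n → ℝ) → ℝ) (x z : Fin n → ℝ) : ℝ :=
  iteratedDeriv 2 (fun t : ℝ => f (x + t • z)) 0

/-- First-order conditions (NSDP-1C) at `(x,Λ)`: `∇f(x) = DC_x*(Λ)` (w.r.t. the dot
product on `ℝ^n` and the trace inner product on `S^d`), `ΛC(x) = 0`, `C(x) ⪰ 0`, `Λ ⪰ 0`. -/
noncomputable def NSDP1C {n d : ℕ} (f : (Fin n → ℝ) → ℝ)
    (C : (Fin n → ℝ) → Matrix (Fin d) (Fin d) ℝ)
    (x : Fin n → ℝ) (Λ : Matrix (Fin d) (Fin d) ℝ) : Prop :=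
  Λ.IsSymm ∧
  (∀ z : Fin n → ℝ, HasDerivAt (fun t : ℝ => f (x + t • z)) ((Λ * DC C x z).trace) 0) ∧
  Λ * C x = 0 ∧ (C x).PosSemidef ∧ Λ.PosSemidef

/-- Second-order necessary conditions (NSDP-2NC) at `(x,Λ)`. -/
noncomputable def NSDP2NC {n d : ℕ} (f : (Fin n → ℝ) → ℝ)
    (C : (Fin n → ℝ) → Matrix (Fin d) (Fin d) ℝ)
    (x : Fin n → ℝ) (Λ : Matrix (Fin d) (Fin d) ℝ) : Prop :=
  NSDP1C f C x Λ ∧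
    ∀ V : Matrix (Fin d) (Fin (d - (C x).rank)) ℝ, Vᵀ * V = 1 → C x * V = 0 →
      ∀ P : Matrix (Fin d) (Fin d) ℝ, IsMoorePenrose (C x) P →
        ∀ z : Fin n → ℝ, Vᵀ * DC C x z * V = 0 →
          0 ≤ D2f f x z - (Λ * D2C C x z).trace
              + 2 * (DC C x z * P * DC C x z * Λ).trace

/-- Second-order necessary conditions (SSV-2NC) at `(x,F,Λ)`. -/
noncomputable def SSV2NC {n d : ℕ} (f : (Fin n → ℝ) → ℝ)
    (C : (Fin n → ℝ) → Matrix (Fin d) (Fin d) ℝ)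
    (x : Fin n → ℝ) (F Λ : Matrix (Fin d) (Fin d) ℝ) : Prop :=
  (Λ.IsSymm ∧
    (∀ z : Fin n → ℝ, HasDerivAt (fun t : ℝ => f (x + t • z)) ((Λ * DC C x z).trace) 0) ∧
    Λ * F = 0 ∧ C x = F * Fᵀ) ∧
  ∀ (z : Fin n → ℝ) (Δ : Matrix (Fin d) (Fin d) ℝ),
    DC C x z = F * Δᵀ + Δ * Fᵀ →
      0 ≤ D2f f x z + 2 * (Λ * Δ * Δᵀ).trace - (Λ * D2C C x z).trace

/-!
Differentiating `F ↦ F * Fᵀ` shows that a lift `Δ` of `z` satisfies `DC_x[z] = F * Δᵀ + Δ * Fᵀ`,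
and `F` and `Λ` annihilate each other by complementarity. Such a `z` is critical for (NSDP), and its
curvature term collapses to `tr (Λ * Δ * Q * Δᵀ)`, where `Q = Fᵀ * C(x)† * F` is the orthogonal
projection onto the row space of `F`. As `Q ⪯ 1` and `Λ ⪰ 0`, this is at most the curvature term
`tr (Λ * Δ * Δᵀ)` of (SSV).
-/

section Pseudoinverse

theorem exists_isSelfAdjoint_pseudoinverse_of_finite_spectrum {A : Type*} [Ring A] [StarRing A]
    [TopologicalSpace A] [Algebra ℝ A] [ContinuousFunctionalCalculus ℝ A IsSelfAdjoint] {a : A}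
    (ha : IsSelfAdjoint a) (hfin : (spectrum ℝ a).Finite) :
    ∃ p : A, IsSelfAdjoint p ∧ Commute a p ∧ a * p * a = a ∧ p * a * p = p := by
  have hcont (g : ℝ → ℝ) : ContinuousOn g (spectrum ℝ a) := hfin.continuousOn g
  have hinv (t : ℝ) : t⁻¹ * t * t⁻¹ = t⁻¹ := by simpa only [inv_inv] using mul_inv_mul_cancel t⁻¹
  have ha_id : cfc (fun t : ℝ => t) a = a := cfc_id' ℝ a
  -- The junk value `0⁻¹ = 0` makes `t ↦ t⁻¹` the right function on a spectrum containing `0`.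
  refine ⟨cfc (fun t : ℝ => t⁻¹) a, cfc_predicate _ a, ?_, ?_, ?_⟩
  · simpa only [ha_id] using cfc_commute_cfc (fun t : ℝ => t) (fun t : ℝ => t⁻¹) a
  · calc a * cfc (fun t : ℝ => t⁻¹) a * a
        = cfc (fun t : ℝ => t * t⁻¹ * t) a := by
          rw [cfc_mul _ _ a (hcont _) (hcont _), cfc_mul _ _ a (hcont _) (hcont _), ha_id]
      _ = a := by simp only [mul_inv_mul_cancel, ha_id]
  · calc cfc (fun t : ℝ => t⁻¹) a * a * cfc (fun t : ℝ => t⁻¹) a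
        = cfc (fun t : ℝ => t⁻¹ * t * t⁻¹) a := by
          rw [cfc_mul _ _ a (hcont _) (hcont _), cfc_mul _ _ a (hcont _) (hcont _), ha_id]
      _ = cfc (fun t : ℝ => t⁻¹) a := by simp only [hinv]

theorem exists_isMoorePenrose_isSymm {d : ℕ} {X : Matrix (Fin d) (Fin d) ℝ} (hX : X.IsSymm) :
    ∃ P, IsMoorePenrose X P ∧ P.IsSymm := by
  obtain ⟨P, hP, hcomm, hXPX, hPXP⟩ := exists_isSelfAdjoint_pseudoinverse_of_finite_spectrum
    (isHermitian_iff_isSymm.mpr hX).isSelfAdjoint X.finite_real_spectrum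
  have hPsymm : P.IsSymm := isHermitian_iff_isSymm.mp hP
  refine ⟨P, ⟨hXPX, hPXP, ?_, ?_⟩, hPsymm⟩
  · rw [transpose_mul, hX.eq, hPsymm.eq, hcomm.eq]
  · rw [transpose_mul, hX.eq, hPsymm.eq, hcomm.eq]

end Pseudoinverse

section Kernel

variable {m n 𝕜 : Type*} [Finite m] [Fintype n] [RCLike 𝕜]

theorem finrank_ker_toEuclideanLin [DecidableEq n] (A : Matrix m n 𝕜) :
    Module.finrank 𝕜 (LinearMap.ker A.toEuclideanLin) = Fintype.card n - A.rank := by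
  have hrank : A.rank = Module.finrank 𝕜 (LinearMap.range A.toEuclideanLin) :=
    A.rank_eq_finrank_range_toLin (PiLp.basisFun 2 𝕜 m) (PiLp.basisFun 2 𝕜 n)
  have hnullity := A.toEuclideanLin.finrank_range_add_finrank_ker
  rw [finrank_euclideanSpace] at hnullity
  omega

theorem exists_conjTranspose_mul_self_eq_one_and_mul_eq_zero {ι : Type*} [Fintype ι]
    [DecidableEq ι] (A : Matrix m n 𝕜) (hι : Fintype.card ι = Fintype.card n - A.rank) :
    ∃ V : Matrix n ι 𝕜, Vᴴ * V = 1 ∧ A * V = 0 := by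
  classical
  have hker := finrank_ker_toEuclideanLin A
  let b := (stdOrthonormalBasis 𝕜 (LinearMap.ker A.toEuclideanLin)).reindex
    (Fintype.equivFinOfCardEq (hι.trans hker.symm)).symm
  refine ⟨Matrix.of fun i k => (b k : EuclideanSpace 𝕜 n) i, ?_, ?_⟩
  · ext k l
    have hb := orthonormal_iff_ite.mp b.orthonormal k l
    simpa [Matrix.mul_apply, Matrix.one_apply, PiLp.inner_apply, mul_comm] using hb
  · ext i k
    have hbk : A.toEuclideanLin (b k) = 0 := (b k).2
    exact congrArg (fun v => v i) hbk

end Kernel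

section Factorization

variable {m k R : Type*} [Fintype m] [Fintype k]

/-- The derivative of `F ↦ F * Fᴴ` at `F` along `Δ`. -/
def gramDeriv [NonUnitalNonAssocSemiring R] [Star R] (F Δ : Matrix m k R) : Matrix m m R :=
  F * Δᴴ + Δ * Fᴴ

theorem isStarProjection_conjTranspose_mul_mul [NonUnitalSemiring R] [StarRing R]
    {F : Matrix m k R} {P : Matrix m m R} (hP : P.IsHermitian) (hPFP : P * (F * Fᴴ) * P = P) :
    IsStarProjection (Fᴴ * P * F) where
  isIdempotentElem :=
    calc Fᴴ * P * F * (Fᴴ * P * F) = Fᴴ * (P * (F * Fᴴ) * P) * F := by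
          simp only [Matrix.mul_assoc]
      _ = Fᴴ * P * F := by rw [hPFP]
  isSelfAdjoint := isHermitian_conjTranspose_mul_mul F hP

theorem conjTranspose_mul_gramDeriv_mul_eq_zero {l : Type*} [NonUnitalSemiring R] [StarRing R]
    {F Δ : Matrix m k R} {V : Matrix m l R} (hFV : Fᴴ * V = 0) :
    Vᴴ * gramDeriv F Δ * V = 0 := by
  have hVF : Vᴴ * F = 0 := by simpa using congrArg conjTranspose hFV
  calc Vᴴ * gramDeriv F Δ * V = Vᴴ * F * (Δᴴ * V) + Vᴴ * Δ * (Fᴴ * V) := by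
        simp only [gramDeriv, Matrix.mul_add, Matrix.add_mul, Matrix.mul_assoc]
    _ = 0 := by rw [hVF, hFV, Matrix.zero_mul, Matrix.mul_zero, add_zero]

theorem trace_gramDeriv_mul_mul_gramDeriv_mul [NonUnitalCommSemiring R] [StarRing R]
    {F Δ : Matrix m k R} {Λ : Matrix m m R} (P : Matrix m m R)
    (hΛ : Λ.IsHermitian) (hΛF : Λ * F = 0) :
    (gramDeriv F Δ * P * gramDeriv F Δ * Λ).trace = (Λ * Δ * (Fᴴ * P * F) * Δᴴ).trace := by
  have hFΛ : Fᴴ * Λ = 0 := by simpa [hΛ.eq] using congrArg conjTranspose hΛF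
  have hleft : Λ * gramDeriv F Δ = Λ * Δ * Fᴴ := by
    rw [gramDeriv, Matrix.mul_add, ← Matrix.mul_assoc, hΛF, Matrix.zero_mul, zero_add,
      Matrix.mul_assoc]
  have hright : gramDeriv F Δ * Λ = F * Δᴴ * Λ := by
    rw [gramDeriv, Matrix.add_mul, Matrix.mul_assoc Δ, hFΛ, Matrix.mul_zero, add_zero]
  calc (gramDeriv F Δ * P * gramDeriv F Δ * Λ).trace
      = (gramDeriv F Δ * P * F * Δᴴ * Λ).trace := by
        rw [Matrix.mul_assoc _ _ Λ, hright]; simp only [Matrix.mul_assoc]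
    _ = (Λ * gramDeriv F Δ * P * F * Δᴴ).trace := by
        rw [trace_mul_comm]; simp only [Matrix.mul_assoc]
    _ = (Λ * Δ * (Fᴴ * P * F) * Δᴴ).trace := by
        rw [hleft]; simp only [Matrix.mul_assoc]

end Factorization

section TraceInequality

variable {m k R : Type*} [Fintype m] [Fintype k]
  [CommRing R] [PartialOrder R] [AddLeftMono R] [StarRing R]

theorem trace_mul_mul_starProjection_mul_le {Λ : Matrix m m R}
    (hΛ : Λ.PosSemidef) (Δ : Matrix m k R) {Q : Matrix k k R} (hQ : IsStarProjection Q) :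
    (Λ * Δ * Q * Δᴴ).trace ≤ (Λ * Δ * Δᴴ).trace := by
  classical
  have hQ' := hQ.one_sub
  have hsq : (1 - Q) * (1 - Q)ᴴ = 1 - Q := by
    rw [← star_eq_conjTranspose, hQ'.isSelfAdjoint.star_eq, hQ'.isIdempotentElem.eq]
  rw [← sub_nonneg]
  calc (0 : R) ≤ ((Δ * (1 - Q))ᴴ * Λ * (Δ * (1 - Q))).trace :=
        (hΛ.conjTranspose_mul_mul_same _).trace_nonneg
    _ = (Λ * Δ * ((1 - Q) * (1 - Q)ᴴ) * Δᴴ).trace := by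
        rw [Matrix.mul_assoc, trace_mul_comm, conjTranspose_mul]; simp only [Matrix.mul_assoc]
    _ = (Λ * Δ * Δᴴ).trace - (Λ * Δ * Q * Δᴴ).trace := by
        rw [hsq, Matrix.mul_sub, Matrix.mul_one, Matrix.sub_mul, trace_sub]

theorem trace_gramDeriv_mul_mul_gramDeriv_mul_le {F Δ : Matrix m k R} {Λ P : Matrix m m R}
    (hΛ : Λ.PosSemidef) (hΛF : Λ * F = 0) (hP : P.IsHermitian) (hPFP : P * (F * Fᴴ) * P = P) :
    (gramDeriv F Δ * P * gramDeriv F Δ * Λ).trace ≤ (Λ * Δ * Δᴴ).trace := by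
  rw [trace_gramDeriv_mul_mul_gramDeriv_mul P hΛ.isHermitian hΛF]
  exact trace_mul_mul_starProjection_mul_le hΛ Δ (isStarProjection_conjTranspose_mul_mul hP hPFP)

end TraceInequality

/-- If `(x,Λ)` satisfies 2NC for (NSDP), then any `(x,F,Λ)` with `C(x) = FFᵀ`
satisfies 2NC for (SSV). -/
theorem statement10 {n d : ℕ} (f : (Fin n → ℝ) → ℝ)
    (C : (Fin n → ℝ) → Matrix (Fin d) (Fin d) ℝ)
    (hf : ContDiff ℝ 2 f)
    (hC : ∀ i j, ContDiff ℝ 2 fun x => C x i j)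
    (hCsymm : ∀ x, (C x).IsSymm)
    (x : Fin n → ℝ) (Λ : Matrix (Fin d) (Fin d) ℝ)
    (h2 : NSDP2NC f C x Λ)
    (F : Matrix (Fin d) (Fin d) ℝ) (hF : C x = F * Fᵀ) :
    SSV2NC f C x F Λ := by
  obtain ⟨⟨hΛsymm, hgrad, hΛC, -, hΛ⟩, hcurv⟩ := h2
  obtain ⟨V, hV, hCV⟩ := exists_conjTranspose_mul_self_eq_one_and_mul_eq_zero
    (ι := Fin (d - (C x).rank)) (C x) (by simp only [Fintype.card_fin])
  obtain ⟨P, hP, hPsymm⟩ := exists_isMoorePenrose_isSymm (hCsymm x)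
  have hΛF : Λ * F = 0 := (mul_self_mul_conjTranspose_eq_zero F Λ).mp (hF ▸ hΛC)
  have hFV : Fᵀ * V = 0 := (self_mul_conjTranspose_mul_eq_zero F V).mp (hF ▸ hCV)
  refine ⟨⟨hΛsymm, hgrad, hΛF, hF⟩, fun z Δ hz => ?_⟩
  have hD : DC C x z = gramDeriv F Δ := hz
  have hVDV : Vᵀ * DC C x z * V = 0 := hD ▸ conjTranspose_mul_gramDeriv_mul_eq_zero hFV
  have hcurv_V : 0 ≤ D2f f x z - (Λ * D2C C x z).trace + 2 * (DC C x z * P * DC C x z * Λ).trace :=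
    hcurv V hV hCV P hP z hVDV
  have hle : (DC C x z * P * DC C x z * Λ).trace ≤ (Λ * Δ * Δᵀ).trace :=
    hD ▸ trace_gramDeriv_mul_mul_gramDeriv_mul_le hΛ hΛF (isHermitian_iff_isSymm.mpr hPsymm)
      (hF ▸ hP.2.1)
  linarith
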